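/- (Rogers–Ramanujan identities) For every complex number q with |q| < 1: (i) ∑_{n=0}^∞ q^{n²}/(q;q)_n = (q²;q⁵)_∞ (q³;q⁵)_∞ (q⁵;q⁵)_∞ / (q;q)_∞, and (ii) ∑_{n=0}^∞ q^{n(n+1)}/(q;q)_n = (q;q⁵)_∞ (q⁴;q⁵)_∞ (q⁵;q⁵)_∞ / (q;q)_∞. -/

import Mathlib

/-- The finite q-shifted factorial `(a;q)_n = ∏_{k=0}^{n-1} (1 - a q^k)`. -/
noncomputable def qPoch (a q : ℂ) (n : ℕ) : ℂ := ∏ k ∈ Finset.range n, (1 - a * q ^ k)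

/-- The infinite q-shifted factorial `(a;q)_∞ = ∏_{k=0}^∞ (1 - a q^k)`. -/
noncomputable def qPochInf (a q : ℂ) : ℂ := ∏' k : ℕ, (1 - a * q ^ k)

lemma hs_congr {ι : Type} {f g : ι → ℂ} {a b : ℂ} (h : HasSum f a) (hf : ∀ x, g x = f x)
    (hab : b = a) : HasSum g b := by
  rw [hab, show g = f from funext hf]; exact h

noncomputable def cc (q : ℂ) (n : ℤ) : ℂ := if 0 ≤ n then (qPoch q q n.toNat)⁻¹ else 0

lemma cc_neg (q : ℂ) {n : ℤ} (h : n < 0) : cc q n = 0 := by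
  unfold cc; rw [if_neg (by omega)]

lemma cc_nat (q : ℂ) (n : ℕ) : cc q n = (qPoch q q n)⁻¹ := by
  unfold cc; rw [if_pos (by omega)]; simp

lemma cc_zero (q : ℂ) : cc q 0 = 1 := by
  simp [cc, qPoch]

lemma one_sub_pow_ne {q : ℂ} (hq : ‖q‖ < 1) (n : ℕ) : 1 - q ^ (n+1) ≠ 0 := by
  intro h
  have h1 : q ^ (n+1) = 1 := by linear_combination -h
  have h2 : ‖q‖ ^ (n+1) = 1 := by rw [← norm_pow, h1, norm_one]
  have := pow_lt_one₀ (norm_nonneg q) hq (Nat.succ_ne_zero n)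
  exact absurd h2 this.ne

lemma cc_rec {q : ℂ} (hq : ‖q‖ < 1) (n : ℤ) : cc q (n - 1) = (1 - q ^ n) * cc q n := by
  rcases lt_trichotomy n 0 with h | h | h
  · rw [cc_neg q h, cc_neg q (by omega)]; simp
  · subst h; rw [cc_neg q (by omega)]; simp
  · obtain ⟨k, rfl⟩ : ∃ k : ℕ, n = ((k + 1 : ℕ) : ℤ) := ⟨(n-1).toNat, by omega⟩
    have e : (((k + 1 : ℕ) : ℤ) - 1) = (k : ℤ) := by push_cast; ring
    rw [e, cc_nat, cc_nat, zpow_natCast, qPoch, qPoch, Finset.prod_range_succ]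
    have := one_sub_pow_ne hq k
    rw [← pow_succ', mul_inv, mul_comm, mul_assoc, inv_mul_cancel₀ this, mul_one]

lemma one_sub_zpow_ne {q : ℂ} (hq : ‖q‖ < 1) {n : ℤ} (h : 0 < n) : 1 - q ^ n ≠ 0 := by
  obtain ⟨k, rfl⟩ : ∃ k : ℕ, n = ((k + 1 : ℕ) : ℤ) := ⟨(n-1).toNat, by omega⟩
  rw [zpow_natCast]; exact one_sub_pow_ne hq k

lemma qvand {q : ℂ} (hq : ‖q‖ < 1) (h0 : q ≠ 0) (M : ℕ) : ∀ m : ℤ,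
    HasSum (fun k : ℤ => q ^ (k * (k + m)) * cc q (M - k) * cc q k * cc q (k + m))
      (cc q M * cc q (M + m)) := by
  induction M with
  | zero =>
    intro m
    have := hasSum_single (f := fun k : ℤ => q ^ (k * (k + m)) * cc q ((0:ℕ) - k) * cc q k * cc q (k + m)) 0 (by
      intro k hk
      rcases lt_or_gt_of_ne hk with h | h
      · simp [cc_neg q h]
      · simp [cc_neg q (show -k < 0 by omega)])
    simpa [cc_zero] using this
  | succ M ih =>
    intro m
    have hA := ih m
    have hB := (Equiv.addRight (-1 : ℤ)).hasSum_iff.mpr (ih (m + 1))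
    have hS := (hA.add (hB.mul_left (q ^ ((M : ℤ) + 1 + m)))).mul_left (1 - q ^ ((M : ℤ) + 1))⁻¹
    have hne := one_sub_zpow_ne hq (show (0:ℤ) < M + 1 by omega)
    refine hs_congr hS ?_ ?_
    · intro k
      rw [eq_inv_mul_iff_mul_eq₀ hne]
      simp only [Function.comp, Equiv.coe_addRight]
      push_cast
      have e1 := cc_rec hq ((M : ℤ) + 1 - k)
      have e2 := cc_rec hq k
      rw [show (M : ℤ) + 1 - k - 1 = M - k by ring] at e1
      rw [show (M : ℤ) - (k + -1) = M + 1 - k by ring, show k + -1 = k - 1 by ring,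
        show k - 1 + (m + 1) = k + m by ring, e1, e2]
      have z1 : q ^ ((M : ℤ) + 1) = q ^ ((M : ℤ) + 1 - k) * q ^ k := by
        rw [← zpow_add₀ h0]; congr 1; ring
      have z2 : q ^ ((M : ℤ) + 1 + m) * q ^ ((k - 1) * (k + m))
          = q ^ (k * (k + m)) * q ^ ((M : ℤ) + 1 - k) := by
        rw [← zpow_add₀ h0, ← zpow_add₀ h0]; congr 1; ring
      rw [z1]
      linear_combination (-cc q (M + 1 - k) * (1 - q ^ k) * cc q k * cc q (k + m)) * z2
    · rw [eq_inv_mul_iff_mul_eq₀ hne]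
      push_cast
      have e1 := cc_rec hq ((M : ℤ) + 1)
      have e2 := cc_rec hq ((M : ℤ) + 1 + m)
      rw [show (M : ℤ) + 1 - 1 = M by ring] at e1
      rw [show (M : ℤ) + 1 + m - 1 = M + m by ring] at e2
      rw [e1, e2, show (M : ℤ) + (m + 1) = M + 1 + m by ring]
      ring

/-- Bailey-type lemma. -/
lemma bailey {q : ℂ} (hq : ‖q‖ < 1) (h0 : q ≠ 0) (a : ℤ) (ha : a ≤ 1)
    (α β : ℤ → ℂ)
    (h : ∀ s : ℕ, HasSum (fun r : ℤ => α r * (cc q (s - r) * cc q (s + r + a))) (β s)) (N : ℕ) :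
    HasSum (fun r : ℤ => (α r * q ^ (r * (r + a))) * (cc q (N - r) * cc q (N + r + a)))
      (∑ s ∈ Finset.range (N + 1), q ^ ((s : ℤ) * (s + a)) * cc q (N - s) * β s) := by
  have h1 := hasSum_sum (s := Finset.range (N + 1)) (fun s _ =>
    (h s).mul_left (q ^ ((s : ℤ) * (s + a)) * cc q (N - s)))
  refine hs_congr h1 ?_ rfl
  intro r
  -- inner sum
  have key : HasSum (fun s : ℤ => q ^ (s * (s + a)) * cc q (N - s) * (cc q (s - r) * cc q (s + r + a)))
      (q ^ (r * (r + a)) * (cc q (N - r) * cc q (N + r + a))) := by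
    by_cases hr : r ≤ N
    · obtain ⟨M, hM⟩ : ∃ M : ℕ, (N : ℤ) - r = M := ⟨((N : ℤ) - r).toNat, by omega⟩
      have hv := ((Equiv.addRight (-r : ℤ)).hasSum_iff.mpr (qvand hq h0 M (2 * r + a))).mul_left
        (q ^ (r * (r + a)))
      refine hs_congr hv ?_ ?_
      · intro s
        simp only [Function.comp, Equiv.coe_addRight]
        rw [← hM, show (N : ℤ) - r - (s + -r) = N - s by ring,
          show s + -r + (2 * r + a) = s + r + a by ring, show s + -r = s - r by ring]
        have : q ^ (s * (s + a)) = q ^ (r * (r + a)) * q ^ ((s - r) * (s + r + a)) := by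
          rw [← zpow_add₀ h0]; congr 1; ring
        rw [this]; ring
      · rw [← hM, show (N : ℤ) - r + (2 * r + a) = N + r + a by ring]
    · rw [cc_neg q (show (N : ℤ) - r < 0 by omega)]
      refine hs_congr hasSum_zero ?_ ?_
      · intro s
        by_cases hs : s - r < 0
        · simp [cc_neg q hs]
        · simp [cc_neg q (show (N : ℤ) - s < 0 by omega)]
      · simp
  have key2 : HasSum (fun s : ℤ => q ^ (s * (s + a)) * cc q (N - s) * (cc q (s - r) * cc q (s + r + a)))
      (∑ s ∈ (Finset.range (N + 1)).map Nat.castEmbedding, q ^ (s * (s + a)) * cc q (N - s) * (cc q (s - r) * cc q (s + r + a))) := by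
    apply hasSum_sum_of_ne_finset_zero
    intro s hs
    simp only [Finset.mem_map, Finset.mem_range, Nat.castEmbedding_apply, not_exists, not_and] at hs
    by_cases hs0 : 0 ≤ s
    · have := hs s.toNat
      have h3 : (N : ℤ) - s < 0 := by omega
      simp [cc_neg q h3]
    · by_cases hr : s - r < 0
      · simp [cc_neg q hr]
      · simp [cc_neg q (show s + r + a < 0 by omega)]
  have e := key.unique key2
  rw [Finset.sum_map] at e
  rw [mul_assoc, e, Finset.mul_sum]
  apply Finset.sum_congr rfl
  intro s _
  simp only [Nat.castEmbedding_apply]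
  ring

def TT (r : ℤ) : ℤ := r * (r - 1) / 2

lemma two_TT (r : ℤ) : 2 * TT r = r * (r - 1) := by
  unfold TT
  apply Int.mul_ediv_cancel'
  have := Int.even_mul_pred_self r
  exact this.two_dvd

lemma TT_pred (r : ℤ) : TT (r - 1) = TT r - r + 1 := by
  have h1 := two_TT r
  have h2 := two_TT (r - 1)
  linarith [show (r-1) * (r-1-1) = r*(r-1) - 2*r + 2 by ring]

lemma TT_succ (r : ℤ) : TT (r + 1) = TT r + r := by
  have := TT_pred (r+1)
  rw [show r + 1 - 1 = r by ring] at this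
  linarith

lemma qPoch_succ (a q : ℂ) (n : ℕ) : qPoch a q (n+1) = qPoch a q n * (1 - a * q ^ n) := by
  rw [qPoch, Finset.prod_range_succ, ← qPoch]

lemma jtpM {q : ℂ} (hq : ‖q‖ < 1) (h0 : q ≠ 0) {w : ℂ} (hw : w ≠ 0) (M N : ℕ) (J : ℂ)
    (h : HasSum (fun r : ℤ => ((-1) ^ r * q ^ TT r * w ^ r) * (cc q (M - r) * cc q (N + r)))
      (cc q (M + N) * J)) :
    HasSum (fun r : ℤ => ((-1) ^ r * q ^ TT r * w ^ r) * (cc q ((M + 1 : ℕ) - r) * cc q (N + r)))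
      (cc q ((M + 1 : ℕ) + N) * (J * (1 - w * q ^ M))) := by
  have hB := ((Equiv.addRight (-1 : ℤ)).hasSum_iff.mpr h).mul_left (- w * q ^ M)
  have hne := one_sub_zpow_ne hq (show (0:ℤ) < M + 1 + N by omega)
  have hS := (h.add hB).mul_left (1 - q ^ ((M : ℤ) + 1 + N))⁻¹
  refine hs_congr hS ?_ ?_
  · intro r
    rw [eq_inv_mul_iff_mul_eq₀ hne]
    simp only [Function.comp, Equiv.coe_addRight]
    push_cast
    have e1 := cc_rec hq ((M : ℤ) + 1 - r)
    have e2 := cc_rec hq ((N : ℤ) + r)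
    rw [show (M : ℤ) + 1 - r - 1 = M - r by ring] at e1
    rw [show r + -1 = r - 1 by ring, TT_pred, show (M : ℤ) - (r - 1) = M + 1 - r by ring,
      show (N : ℤ) + (r - 1) = N + r - 1 by ring, e1, e2]
    have z1 : q ^ ((M : ℤ) + 1 + N) = q ^ ((M : ℤ) + 1 - r) * q ^ ((N : ℤ) + r) := by
      rw [← zpow_add₀ h0]; congr 1; ring
    have z2 : q ^ M * q ^ (TT r - r + 1) = q ^ TT r * q ^ ((M : ℤ) + 1 - r) := by
      rw [← zpow_natCast, ← zpow_add₀ h0, ← zpow_add₀ h0]; congr 1; ring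
    have z3 : w ^ r = w ^ (r - 1) * w := by
      rw [zpow_sub_one₀ hw]; field_simp
    have z4 : (-1 : ℂ) ^ (r - 1) = - (-1) ^ r := by
      rw [zpow_sub_one₀ (by norm_num)]; norm_num
    rw [z1, z3, z4]
    linear_combination (-w * (-1) ^ r * w ^ (r - 1) * cc q (M + 1 - r) * ((1 - q ^ ((N : ℤ) + r)) * cc q (N + r))) * z2
  · rw [eq_inv_mul_iff_mul_eq₀ hne]
    push_cast
    have e1 := cc_rec hq ((M : ℤ) + 1 + N)
    rw [show (M : ℤ) + 1 + N - 1 = M + N by ring] at e1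
    rw [e1]
    ring

lemma jtpN {q : ℂ} (hq : ‖q‖ < 1) (h0 : q ≠ 0) {w : ℂ} (hw : w ≠ 0) (M N : ℕ) (J : ℂ)
    (h : HasSum (fun r : ℤ => ((-1) ^ r * q ^ TT r * w ^ r) * (cc q (M - r) * cc q (N + r)))
      (cc q (M + N) * J)) :
    HasSum (fun r : ℤ => ((-1) ^ r * q ^ TT r * w ^ r) * (cc q (M - r) * cc q ((N + 1 : ℕ) + r)))
      (cc q (M + (N + 1 : ℕ)) * (J * (1 - q / w * q ^ N))) := by
  have hB := ((Equiv.addRight (1 : ℤ)).hasSum_iff.mpr h).mul_left (- w⁻¹ * q ^ (N + 1))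
  have hne := one_sub_zpow_ne hq (show (0:ℤ) < M + (N + 1) by omega)
  have hS := (h.add hB).mul_left (1 - q ^ ((M : ℤ) + (N + 1)))⁻¹
  refine hs_congr hS ?_ ?_
  · intro r
    rw [eq_inv_mul_iff_mul_eq₀ hne]
    simp only [Function.comp, Equiv.coe_addRight]
    push_cast
    have e1 := cc_rec hq ((M : ℤ) - r)
    have e2 := cc_rec hq ((N : ℤ) + 1 + r)
    rw [show (N : ℤ) + 1 + r - 1 = N + r by ring] at e2
    rw [TT_succ, show (M : ℤ) - (r + 1) = M - r - 1 by ring,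
      show (N : ℤ) + (r + 1) = N + 1 + r by ring, e1, e2]
    have z1 : q ^ ((M : ℤ) + (N + 1)) = q ^ ((M : ℤ) - r) * q ^ ((N : ℤ) + 1 + r) := by
      rw [← zpow_add₀ h0]; congr 1; ring
    have z2 : q ^ (N + 1) * q ^ (TT r + r) = q ^ TT r * q ^ ((N : ℤ) + 1 + r) := by
      rw [← zpow_natCast, ← zpow_add₀ h0, ← zpow_add₀ h0]; congr 1; push_cast; ring
    have z3 : w⁻¹ * w ^ (r + 1) = w ^ r := by
      rw [zpow_add_one₀ hw]; field_simp
    have z4 : (-1 : ℂ) ^ (r + 1) = - (-1) ^ r := by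
      rw [zpow_add_one₀ (by norm_num)]; norm_num
    rw [z1, z4]
    linear_combination (-(-1) ^ r * w ^ r * cc q (N + 1 + r) * ((1 - q ^ ((M : ℤ) - r)) * cc q (M - r))) * z2
      - ((-1) ^ r * q ^ (N + 1) * q ^ (TT r + r) * cc q (N + 1 + r) * ((1 - q ^ ((M : ℤ) - r)) * cc q (M - r))) * z3
  · rw [eq_inv_mul_iff_mul_eq₀ hne]
    push_cast
    have e1 := cc_rec hq ((M : ℤ) + (N + 1))
    rw [show (M : ℤ) + (N + 1) - 1 = M + N by ring] at e1
    rw [e1]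
    field_simp
    ring

lemma jtp_fin {q : ℂ} (hq : ‖q‖ < 1) (h0 : q ≠ 0) {w : ℂ} (hw : w ≠ 0) (M N : ℕ) :
    HasSum (fun r : ℤ => ((-1) ^ r * q ^ TT r * w ^ r) * (cc q (M - r) * cc q (N + r)))
      (cc q (M + N) * (qPoch w q M * qPoch (q / w) q N)) := by
  induction N with
  | zero =>
    induction M with
    | zero =>
      have := hasSum_single (f := fun r : ℤ => ((-1) ^ r * q ^ TT r * w ^ r) * (cc q ((0:ℕ) - r) * cc q ((0:ℕ) + r))) 0 (by
        intro k hk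
        rcases lt_or_gt_of_ne hk with h | h
        · simp [cc_neg q h]
        · simp [cc_neg q (show -k < 0 by omega)])
      simpa [cc_zero, TT, qPoch] using this
    | succ M ih =>
      have := jtpM hq h0 hw M 0 _ ih
      rw [qPoch_succ]
      exact hs_congr this (fun _ => rfl) (by ring)
  | succ N ih =>
    have := jtpN hq h0 hw M N _ ih
    rw [qPoch_succ]
    exact hs_congr this (fun _ => rfl) (by ring)

open Filter Topology in
lemma qPoch_tendsto (a : ℂ) {q : ℂ} (hq : ‖q‖ < 1) :
    Tendsto (qPoch a q) atTop (𝓝 (qPochInf a q)) := by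
  have hs : Summable (fun k : ℕ => - (a * q ^ k)) :=
    ((summable_geometric_of_norm_lt_one hq).mul_left a).neg
  have hm := Complex.multipliable_one_add_of_summable hs
  have := hm.tendsto_prod_tprod_nat
  simp only [← sub_eq_add_neg] at this
  exact this

lemma qPochInf_ne {q : ℂ} (hq : ‖q‖ < 1) : qPochInf q q ≠ 0 := by
  have hs : Summable (fun k : ℕ => ‖- (q * q ^ k)‖) :=
    ((summable_geometric_of_norm_lt_one hq).mul_left q).neg.norm
  have := tprod_one_add_ne_zero_of_summable (f := fun k : ℕ => - (q * q ^ k)) (by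
    intro k
    rw [← sub_eq_add_neg, ← pow_succ']
    exact one_sub_pow_ne hq k) hs
  simp only [← sub_eq_add_neg] at this
  exact this

open Filter Topology in
lemma cc_tendsto {q : ℂ} (hq : ‖q‖ < 1) : Tendsto (cc q) atTop (𝓝 (qPochInf q q)⁻¹) := by
  have h1 : Tendsto (fun n : ℤ => n.toNat) atTop atTop := by
    rw [tendsto_atTop_atTop]
    intro b
    exact ⟨b, fun a ha => by omega⟩
  have h2 := ((qPoch_tendsto q hq).inv₀ (qPochInf_ne hq)).comp h1
  refine h2.congr' ?_
  filter_upwards [eventually_ge_atTop 0] with n hn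
  simp [cc, hn]

lemma cc_bdd {q : ℂ} (hq : ‖q‖ < 1) : ∃ C : ℝ, 0 ≤ C ∧ ∀ n, ‖cc q n‖ ≤ C := by
  have h := Metric.isBounded_range_of_tendsto _ ((qPoch_tendsto q hq).inv₀ (qPochInf_ne hq))
  obtain ⟨C, hC⟩ := h.exists_norm_le
  refine ⟨max C 0, le_max_right _ _, fun n => ?_⟩
  by_cases hn : 0 ≤ n
  · refine le_trans (hC _ ⟨n.toNat, ?_⟩) (le_max_left _ _)
    simp [cc, hn]
  · rw [cc_neg q (by omega)]; simp

open Filter Topology in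
lemma lim_lemma {q : ℂ} (hq : ‖q‖ < 1) (α : ℤ → ℂ) (hα : Summable (fun r => ‖α r‖)) (a : ℤ) :
    Tendsto (fun N : ℕ => ∑' r, α r * (cc q (N - r) * cc q (N + r + a))) atTop
      (𝓝 ((∑' r, α r) * ((qPochInf q q)⁻¹ * (qPochInf q q)⁻¹))) := by
  obtain ⟨C, hC0, hC⟩ := cc_bdd hq
  rw [← tsum_mul_right]
  apply tendsto_tsum_of_dominated_convergence (bound := fun r => ‖α r‖ * (C * C))
  · exact hα.mul_right _
  · intro r
    apply Tendsto.const_mul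
    have hc : Tendsto (fun N : ℕ => (N : ℤ)) atTop atTop := tendsto_natCast_atTop_atTop
    apply Tendsto.mul
    · exact (cc_tendsto hq).comp (tendsto_atTop_add_const_right _ (-r) hc)
    · have := (cc_tendsto hq).comp (tendsto_atTop_add_const_right _ (r + a) hc)
      refine this.congr (fun n => ?_)
      simp [add_assoc]
  · refine Eventually.of_forall (fun N r => ?_)
    rw [norm_mul, norm_mul]
    gcongr
    · exact hC _
    · exact hC _

open Filter Topology in
lemma jtp_inf {q : ℂ} (hq : ‖q‖ < 1) (h0 : q ≠ 0) {w : ℂ} (hw : w ≠ 0)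
    (hs : Summable (fun r : ℤ => ‖(-1) ^ r * q ^ TT r * w ^ r‖)) :
    ∑' r : ℤ, (-1) ^ r * q ^ TT r * w ^ r =
      qPochInf w q * qPochInf (q / w) q * qPochInf q q := by
  have h1 := lim_lemma hq _ hs 0
  have hc : Tendsto (fun N : ℕ => (N : ℤ) + N) atTop atTop :=
    tendsto_natCast_atTop_atTop.atTop_add_atTop tendsto_natCast_atTop_atTop
  have h2 := ((cc_tendsto hq).comp hc).mul ((qPoch_tendsto w hq).mul (qPoch_tendsto (q / w) hq))
  have h3 := tendsto_nhds_unique h1 (h2.congr (fun N => by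
    have := (jtp_fin hq h0 hw N N).tsum_eq
    simp only [add_zero]
    exact this.symm))
  have := qPochInf_ne hq
  field_simp at h3
  rw [h3]; ring

open Filter Topology in
lemma rr_core {q : ℂ} (hq : ‖q‖ < 1) (h0 : q ≠ 0) (a : ℕ) (ha : a ≤ 1)
    (hs : Summable (fun r : ℤ => ‖(-1) ^ r * (q ^ 5) ^ TT r * (q ^ (2 + 2 * a)) ^ r‖)) :
    HasSum (fun n : ℕ => q ^ (n * (n + a)) / qPoch q q n)
      ((∑' r : ℤ, (-1) ^ r * (q ^ 5) ^ TT r * (q ^ (2 + 2 * a)) ^ r) / qPochInf q q) := by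
  have b0 : ∀ s : ℕ, HasSum (fun r : ℤ => ((-1) ^ r * q ^ TT r) * (cc q (s - r) * cc q (s + r + a)))
      ((fun s : ℤ => if s = 0 then (1 : ℂ) else 0) s) := by
    intro s
    refine hs_congr (jtp_fin hq h0 one_ne_zero s (s + a)) ?_ ?_
    · intro r
      rw [one_zpow, mul_one]; push_cast
      rw [show (s : ℤ) + r + a = s + a + r by ring]
    · rcases s with _ | s
      · interval_cases a
        · simp [cc_zero, qPoch]
        · have := one_sub_pow_ne hq 0
          have e := cc_nat q 1
          simp [qPoch] at this e
          simp [qPoch, e, this]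
      · beta_reduce
        rw [if_neg (by push_cast; omega)]
        have : qPoch 1 q (s + 1) = 0 := by
          rw [qPoch, Finset.prod_range_succ']; simp
        rw [this]; simp
  have b1 := bailey hq h0 a (by omega) (fun r : ℤ => (-1) ^ r * q ^ TT r)
    (fun s : ℤ => if s = 0 then (1 : ℂ) else 0) b0
  have b1' : ∀ s : ℕ, HasSum (fun r : ℤ => ((-1) ^ r * q ^ TT r * q ^ (r * (r + a))) * (cc q (s - r) * cc q (s + r + a)))
      (cc q s) := by
    intro N
    refine hs_congr (b1 N) (fun _ => rfl) ?_
    rw [Finset.sum_range_succ']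
    simp
    rw [Finset.sum_eq_zero]
    intro x _
    rw [if_neg (by omega)]
  have b2 := bailey hq h0 a (by omega) (fun r : ℤ => (-1) ^ r * q ^ TT r * q ^ (r * (r + a))) (cc q) b1'
  have hα : ∀ r : ℤ, (-1) ^ r * q ^ TT r * q ^ (r * (r + a)) * q ^ (r * (r + a))
      = (-1) ^ r * (q ^ 5) ^ TT r * (q ^ (2 + 2 * a)) ^ r := by
    intro r
    rw [← zpow_natCast, ← zpow_natCast, ← zpow_mul, ← zpow_mul, mul_assoc, mul_assoc, mul_assoc,
      ← zpow_add₀ h0, ← zpow_add₀ h0, ← zpow_add₀ h0]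
    congr 2
    have := two_TT r
    push_cast
    linear_combination (-2) * this
  simp only [hα] at b2
  have h1 := lim_lemma hq _ hs a
  -- the other limit
  obtain ⟨C, hC0, hC⟩ := cc_bdd hq
  have hsum : Summable (fun n : ℕ => ‖q‖ ^ n * C) :=
    (summable_geometric_of_lt_one (norm_nonneg q) hq).mul_right C
  have hterm : ∀ n : ℕ, ‖q ^ (n * (n + a)) * cc q n‖ ≤ ‖q‖ ^ n * C := by
    intro n
    rw [norm_mul, norm_pow]
    gcongr ?_ * ?_
    · apply pow_le_pow_of_le_one (norm_nonneg q) hq.le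
      rcases n with _ | n
      · simp
      · nlinarith
    · exact hC _
  have hS : Summable (fun n : ℕ => q ^ (n * (n + a)) * cc q n) :=
    Summable.of_norm_bounded hsum hterm
  have h2 : Tendsto (fun N : ℕ => ∑' n : ℕ, q ^ (n * (n + a)) * cc q n * cc q (N - n)) atTop
      (𝓝 (∑' n : ℕ, q ^ (n * (n + a)) * cc q n * (qPochInf q q)⁻¹)) := by
    apply tendsto_tsum_of_dominated_convergence (bound := fun n => ‖q‖ ^ n * C * C)
    · exact hsum.mul_right _
    · intro n
      apply Tendsto.const_mul
      have hc : Tendsto (fun N : ℕ => (N : ℤ)) atTop atTop := tendsto_natCast_atTop_atTop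
      exact (cc_tendsto hq).comp (tendsto_atTop_add_const_right _ (-(n : ℤ)) hc)
    · refine Eventually.of_forall (fun N n => ?_)
      rw [norm_mul]
      exact mul_le_mul (hterm n) (hC _) (norm_nonneg _) (by positivity)
  rw [tsum_mul_right] at h2
  have h3 := tendsto_nhds_unique h1 (h2.congr (fun N => by
    rw [(b2 N).tsum_eq]
    rw [tsum_eq_sum (s := Finset.range (N + 1))]
    · apply Finset.sum_congr rfl
      intro s _
      rw [← zpow_natCast]; push_cast; ring
    · intro n hn
      rw [Finset.mem_range] at hn
      rw [cc_neg q (show (N : ℤ) - n < 0 by omega), mul_zero]))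
  have hQ := qPochInf_ne hq
  refine hs_congr hS.hasSum ?_ ?_
  · intro n; rw [cc_nat, div_eq_mul_inv]
  · field_simp at h3
    rw [h3]; field_simp

lemma summ_theta {q : ℂ} (hq : ‖q‖ < 1) (h0 : q ≠ 0) (a : ℕ) (ha : a ≤ 1) :
    Summable (fun r : ℤ => ‖(-1) ^ r * (q ^ 5) ^ TT r * (q ^ (2 + 2 * a)) ^ r‖) := by
  have hg := summable_geometric_of_lt_one (norm_nonneg q) hq
  have hz : Summable (fun r : ℤ => ‖q‖ ^ r.natAbs) := by
    apply Summable.of_nat_of_neg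
    · simpa using hg
    · simpa using hg
  refine Summable.of_nonneg_of_le (fun _ => norm_nonneg _) (fun r => ?_) hz
  have hα : (q ^ 5) ^ TT r * (q ^ (2 + 2 * a)) ^ r = q ^ (5 * TT r + (2 + 2 * a) * r) := by
    rw [← zpow_natCast, ← zpow_natCast, ← zpow_mul, ← zpow_mul, ← zpow_add₀ h0]
    push_cast; rfl
  rw [mul_assoc, hα, norm_mul, norm_zpow, norm_zpow, norm_neg, norm_one, one_zpow, one_mul,
    ← zpow_natCast]
  apply zpow_le_zpow_right_of_le_one₀ (norm_pos_iff.mpr h0) hq.le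
  have h2 := two_TT r
  have h3 : |r| ≤ r * r := by
    rcases abs_cases r with ⟨h, h'⟩ | ⟨h, h'⟩ <;> rw [h] <;> nlinarith
  have h4 : -|r| ≤ r := neg_abs_le r
  have h5 : r ≤ |r| := le_abs_self r
  rw [Int.natCast_natAbs]
  interval_cases a <;> push_cast <;> nlinarith

lemma qPochInf_zero : qPochInf 0 0 = 1 := by simp [qPochInf]

theorem rogers_ramanujan (q : ℂ) (hq : ‖q‖ < 1) :
    HasSum (fun n : ℕ => q ^ (n ^ 2) / qPoch q q n)
      (qPochInf (q ^ 2) (q ^ 5) * qPochInf (q ^ 3) (q ^ 5) * qPochInf (q ^ 5) (q ^ 5) /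
        qPochInf q q) ∧
    HasSum (fun n : ℕ => q ^ (n * (n + 1)) / qPoch q q n)
      (qPochInf q (q ^ 5) * qPochInf (q ^ 4) (q ^ 5) * qPochInf (q ^ 5) (q ^ 5) /
        qPochInf q q) := by
  by_cases h0 : q = 0
  · subst h0
    constructor
    · have := hasSum_single (f := fun n : ℕ => (0:ℂ) ^ (n ^ 2) / qPoch 0 0 n) 0 (by
        intro n hn; simp [hn])
      simpa [qPochInf_zero, qPoch] using this
    · have := hasSum_single (f := fun n : ℕ => (0:ℂ) ^ (n * (n + 1)) / qPoch 0 0 n) 0 (by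
        intro n hn; simp [hn])
      simpa [qPochInf_zero, qPoch] using this
  · have hq5 : ‖q ^ 5‖ < 1 := by
      rw [norm_pow]; exact pow_lt_one₀ (norm_nonneg q) hq (by norm_num)
    have h50 : q ^ 5 ≠ 0 := pow_ne_zero _ h0
    constructor
    · have s := summ_theta hq h0 0 (by norm_num)
      refine hs_congr (rr_core hq h0 0 (by norm_num) s) (fun n => by simp [pow_two]) ?_
      rw [jtp_inf hq5 h50 (pow_ne_zero _ h0) s]
      rw [show q ^ 5 / q ^ (2 + 2 * 0) = q ^ 3 by field_simp]
    · have s := summ_theta hq h0 1 (by norm_num)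
      refine hs_congr (rr_core hq h0 1 (by norm_num) s) (fun n => rfl) ?_
      rw [jtp_inf hq5 h50 (pow_ne_zero _ h0) s]
      rw [show q ^ 5 / q ^ (2 + 2 * 1) = q by field_simp]
      norm_num
      ring
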